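/- Suppose S_σ = S_τ for finite words σ, τ over {1,…,m}. Then there exist a positive integer M and finite words σ₁,…,σ_M and τ₁,…,τ_M with σ_M = σ, τ_M = τ, such that for all 1 ≤ k ≤ M: σ_k is a prefix of σ, τ_k is a prefix of τ, p_{σ_k}, p_{τ_k} ∈ ((k−1)T, kT], and (p_{σ_k} − p_{τ_k}, λ^{−p_{τ_k}}(b_{σ_k} − b_{τ_k})) ∈ Ξ. -/

import Mathlib

open Polynomial Filter

noncomputable section

namespace PVOSC

variable {m : ℕ}

/-- `λ⁻¹` is a Pisot (P.V.) number: an algebraic integer `> 1` all of whose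
Galois conjugates other than itself have complex absolute value `< 1`. -/
def IsPisot (θ : ℝ) : Prop :=
  1 < θ ∧ IsIntegral ℤ θ ∧
    ∀ z : ℂ, aeval z (minpoly ℤ θ) = 0 → z ≠ (θ : ℂ) → ‖z‖ < 1

/-- `p_σ` for a finite word `σ`. -/
def wordP (p : Fin m → ℕ) (σ : List (Fin m)) : ℕ := (σ.map p).sum

/-- The contracting similitude `S_i(x) = λ^{p_i} x + b_i`. -/
def Smap (lam : ℝ) (p : Fin m → ℕ) (b : Fin m → ℝ) (i : Fin m) : ℝ → ℝ :=
  fun x => lam ^ p i * x + b i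

/-- `S_σ = S_{i₁} ∘ ⋯ ∘ S_{i_k}` for `σ = i₁ ⋯ i_k`. -/
def SW (lam : ℝ) (p : Fin m → ℕ) (b : Fin m → ℝ) (σ : List (Fin m)) : ℝ → ℝ :=
  σ.foldr (fun i f => Smap lam p b i ∘ f) id

/-- `b_σ`, the translation part of `S_σ`. -/
def wordB (lam : ℝ) (p : Fin m → ℕ) (b : Fin m → ℝ) (σ : List (Fin m)) : ℝ :=
  SW lam p b σ 0

/-- `B = {0, b₁, …, b_m}`. -/
def Bset (b : Fin m → ℝ) : Set ℝ := insert 0 (Set.range b)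

/-- `B − B`. -/
def BB (b : Fin m → ℝ) : Set ℝ := {x | ∃ u ∈ Bset b, ∃ v ∈ Bset b, x = u - v}

/-- `max_i |b_i|`. -/
def bmax (b : Fin m → ℝ) : ℝ := ⨆ i, |b i|

/-- The set `𝒞`. -/
def Cset (lam : ℝ) (b : Fin m → ℝ) (T : ℕ) : Set ℝ :=
  {x | |x| ≤ (1 + lam ^ (1 - (T : ℤ))) * bmax b / (1 - lam) ∧
    ∃ R : ℝ[X], (∀ n, R.coeff n ∈ BB b) ∧ lam ^ (2 - (T : ℤ)) * x = R.eval lam⁻¹}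

/-- The vertex set `Ξ = {n ∈ ℤ : |n| ≤ T−1} × 𝒞`. -/
def Xi (lam : ℝ) (b : Fin m → ℝ) (T : ℕ) : Set (ℤ × ℝ) :=
  {v | |v.1| ≤ (T : ℤ) - 1 ∧ v.2 ∈ Cset lam b T}

/-- The open set condition. -/
def OSC (lam : ℝ) (p : Fin m → ℕ) (b : Fin m → ℝ) : Prop :=
  ∃ U : Set ℝ, U.Nonempty ∧ IsOpen U ∧ (⋃ i, Smap lam p b i '' U) ⊆ U ∧
    ∀ i j : Fin m, i ≠ j → Smap lam p b i '' U ∩ Smap lam p b j '' U = ∅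

/-- The strong separation condition for the attractor `E`. -/
def SSC (lam : ℝ) (p : Fin m → ℕ) (b : Fin m → ℝ) (E : Set ℝ) : Prop :=
  ∀ i j : Fin m, i ≠ j → Smap lam p b i '' E ∩ Smap lam p b j '' E = ∅

/-- Group law on `ℤ × ℝ`: `(p₁,c₁)·(p₂,c₂) = (p₁+p₂, λ^{p₁} c₂ + c₁)`. -/
def gmul (lam : ℝ) (u v : ℤ × ℝ) : ℤ × ℝ := (u.1 + v.1, lam ^ u.1 * v.2 + u.2)

/-- Inverse for the group law: `(p,c)⁻¹ = (−p, −λ^{−p} c)`. -/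
def ginv (lam : ℝ) (u : ℤ × ℝ) : ℤ × ℝ := (-u.1, -(lam ^ (-u.1) * u.2))

/-- The group element `(p_σ, b_σ)` associated to a finite word `σ`. -/
def elem (lam : ℝ) (p : Fin m → ℕ) (b : Fin m → ℝ) (σ : List (Fin m)) : ℤ × ℝ :=
  ((wordP p σ : ℤ), wordB lam p b σ)

/-- The sequence `(q_k, c_k)` with the recursive structure w.r.t. `({α_k}, {β_k})`:
`recSeq … k = (q_{k+1}, c_{k+1})`, i.e. index `k` corresponds to `(q_{k+1}, c_{k+1})`. -/
def recSeq (lam : ℝ) (p : Fin m → ℕ) (b : Fin m → ℝ) (α β : ℕ → List (Fin m)) : ℕ → ℤ × ℝ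
  | 0 => gmul lam (ginv lam (elem lam p b (β 0))) (elem lam p b (α 0))
  | (k+1) => gmul lam (ginv lam (elem lam p b (β (k+1))))
      (gmul lam (recSeq lam p b α β k) (elem lam p b (α (k+1))))

/-- The edge relation of the directed graph `G` on `Ξ`. -/
def edge (lam : ℝ) (p : Fin m → ℕ) (b : Fin m → ℝ) (T : ℕ) (u v : ℤ × ℝ) : Prop :=
  u ∈ Xi lam b T ∧ v ∈ Xi lam b T ∧
    ∃ α β : List (Fin m), 1 ≤ wordP p α ∧ wordP p α ≤ 2 * T - 1 ∧
      1 ≤ wordP p β ∧ wordP p β ≤ 2 * T - 1 ∧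
      v.1 = (wordP p α : ℤ) + u.1 - (wordP p β : ℤ) ∧
      v.2 = lam ^ (-(wordP p β : ℤ)) * u.2 + lam ^ (u.1 - (wordP p β : ℤ)) * wordB lam p b α
        - lam ^ (-(wordP p β : ℤ)) * wordB lam p b β

/-- `Λ = Ξ ∩ {(p_j − p_i, λ^{−p_i}(b_j − b_i)) : i ≠ j}`. -/
def Lam (lam : ℝ) (p : Fin m → ℕ) (b : Fin m → ℝ) (T : ℕ) : Set (ℤ × ℝ) :=
  Xi lam b T ∩ {v | ∃ i j : Fin m, i ≠ j ∧
    v = ((p j : ℤ) - (p i : ℤ), lam ^ (-(p i : ℤ)) * (b j - b i))}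

/-- The length-`k` prefix of an infinite word `ω`. -/
def prefixList (ω : ℕ → Fin m) (k : ℕ) : List (Fin m) := (List.range k).map ω

/-!
Equality of `S_σ` and `S_τ` forces `p_σ = p_τ` and `b_σ = b_τ`. Cut both words at weight `kT`: since
no letter weighs more than `T`, the cuts `σ_k`, `τ_k` have weights in `((k - 1)T, kT]`, which differ
by less than `T`. Writing `σ = σ_k σ'` and `τ = τ_k τ'`, the equality `b_σ = b_τ` moves the
difference of the heads to the tails, `λ^{-p_{τ_k}} (b_{σ_k} - b_{τ_k}) = b_{τ'} - λ^{q} b_{σ'}`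
with `q = p_{σ_k} - p_{τ_k}`, and this is bounded by a geometric series. On the other hand
`b_{σ_k} - b_{τ_k}` is a polynomial in `λ` with coefficients in `B - B`, and reversing the order of
its coefficients gives the required polynomial in `λ⁻¹`.
-/

lemma eval_inv_reflect {K : Type*} [Field K] {x : K} (hx : x ≠ 0) {f : K[X]} {n : ℕ}
    (hf : f.natDegree ≤ n) : (reflect n f).eval x⁻¹ = x⁻¹ ^ n * f.eval x := by
  let := invertibleOfNonzero hx
  have reflect_mul_pow : (reflect n f).eval x⁻¹ * x ^ n = f.eval x :=
    eval₂_reflect_mul_pow (RingHom.id K) x n f hf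
  rw [← reflect_mul_pow, inv_pow]
  field_simp

section Words

variable {lam : ℝ} {p : Fin m → ℕ} {b : Fin m → ℝ}

@[simp]
lemma wordP_nil : wordP p [] = 0 := rfl

@[simp]
lemma wordP_cons (i : Fin m) (w : List (Fin m)) : wordP p (i :: w) = p i + wordP p w := by
  simp [wordP]

lemma wordP_pos (hp : ∀ i, 1 ≤ p i) {w : List (Fin m)} (hw : w ≠ []) : 0 < wordP p w := by
  obtain ⟨i, v, rfl⟩ := List.exists_cons_of_ne_nil hw
  exact wordP_cons (p := p) i v ▸ Nat.add_pos_left (hp i) _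

@[simp]
lemma wordB_nil : wordB lam p b [] = 0 := rfl

@[simp]
lemma wordB_cons (i : Fin m) (w : List (Fin m)) :
    wordB lam p b (i :: w) = lam ^ p i * wordB lam p b w + b i := rfl

lemma SW_apply (w : List (Fin m)) (x : ℝ) :
    SW lam p b w x = lam ^ wordP p w * x + wordB lam p b w := by
  induction w with
  | nil => simp [SW]
  | cons i w ih =>
    have SW_cons_apply : SW lam p b (i :: w) x = lam ^ p i * SW lam p b w x + b i := rfl
    rw [SW_cons_apply, ih, wordP_cons, wordB_cons, pow_add]
    ring

lemma wordB_append (u w : List (Fin m)) :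
    wordB lam p b (u ++ w) = wordB lam p b u + lam ^ wordP p u * wordB lam p b w := by
  induction u with
  | nil => simp
  | cons i u ih =>
    rw [List.cons_append, wordB_cons, wordB_cons, ih, wordP_cons, pow_add]
    ring

lemma wordB_eq_of_SW_eq {σ τ : List (Fin m)} (h : SW lam p b σ = SW lam p b τ) :
    wordB lam p b σ = wordB lam p b τ :=
  congrFun h 0

lemma wordP_eq_of_SW_eq (hlam0 : 0 < lam) (hlam1 : lam ≠ 1) {σ τ : List (Fin m)}
    (h : SW lam p b σ = SW lam p b τ) : wordP p σ = wordP p τ := by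
  have ratio_eq : lam ^ wordP p σ = lam ^ wordP p τ := by
    simpa [SW_apply, wordB_eq_of_SW_eq h] using congrFun h 1
  exact pow_right_injective₀ hlam0 hlam1 ratio_eq

/-- The longest prefix of the word `w` whose weight `p_v` is at most `L`; it defines the paper's
`σ_k` as `cut p (k * T) σ`. -/
def cut (p : Fin m → ℕ) : ℕ → List (Fin m) → List (Fin m)
  | _, [] => []
  | L, i :: w => if p i ≤ L then i :: cut p (L - p i) w else []

lemma cut_prefix (L : ℕ) (w : List (Fin m)) : cut p L w <+: w := by
  induction w generalizing L with
  | nil => exact List.prefix_rfl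
  | cons i w ih =>
    rw [cut]
    split_ifs
    · exact (List.prefix_cons_inj i).2 (ih _)
    · exact List.nil_prefix

lemma wordP_cut_le (L : ℕ) (w : List (Fin m)) : wordP p (cut p L w) ≤ L := by
  induction w generalizing L with
  | nil => exact Nat.zero_le L
  | cons i w ih =>
    rw [cut]
    split_ifs
    · have := ih (L - p i)
      rw [wordP_cons]
      lia
    · exact Nat.zero_le L

lemma cut_eq_self {L : ℕ} {w : List (Fin m)} (hw : wordP p w ≤ L) : cut p L w = w := by
  induction w generalizing L with
  | nil => rfl
  | cons i w ih =>
    rw [wordP_cons] at hw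
    rw [cut, if_pos (by lia), ih (by lia)]

lemma lt_wordP_cut {T n : ℕ} (hpT : ∀ i, p i ≤ T) {w : List (Fin m)} (hn : n < wordP p w) :
    n < wordP p (cut p (n + T) w) := by
  induction w generalizing n with
  | nil => exact hn
  | cons i w ih =>
    rw [wordP_cons] at hn
    rw [cut, if_pos ((hpT i).trans (Nat.le_add_left T n)), wordP_cons]
    rcases lt_or_ge n (p i) with hni | hni
    · exact Nat.lt_add_right _ hni
    · have tail_lt := ih (n := n - p i) (by lia)
      rw [← Nat.sub_add_comm hni] at tail_lt
      lia

lemma abs_le_bmax (b : Fin m → ℝ) (i : Fin m) : |b i| ≤ bmax b :=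
  le_ciSup (f := fun i => |b i|) (Set.finite_range _).bddAbove i

lemma bmax_nonneg (b : Fin m → ℝ) : 0 ≤ bmax b :=
  Real.iSup_nonneg fun i => abs_nonneg (b i)

lemma abs_wordB_le (hlam0 : 0 ≤ lam) (hlam1 : lam < 1) (hp : ∀ i, 1 ≤ p i) (w : List (Fin m)) :
    |wordB lam p b w| ≤ bmax b / (1 - lam) := by
  have one_sub_pos : 0 < 1 - lam := sub_pos.2 hlam1
  induction w with
  | nil => simpa using div_nonneg (bmax_nonneg b) one_sub_pos.le
  | cons i w ih =>
    have pow_le : lam ^ p i ≤ lam :=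
      pow_le_of_le_one hlam0 hlam1.le (Nat.one_le_iff_ne_zero.1 (hp i))
    calc |wordB lam p b (i :: w)|
        ≤ |lam ^ p i * wordB lam p b w| + |b i| := abs_add_le _ _
      _ = lam ^ p i * |wordB lam p b w| + |b i| := by rw [abs_mul, abs_of_nonneg (by positivity)]
      _ ≤ lam * (bmax b / (1 - lam)) + bmax b := by
          gcongr
          exact abs_le_bmax b i
      _ = bmax b / (1 - lam) := by
          field_simp
          ring

lemma zpow_neg_mul_wordB_sub (hlam : lam ≠ 0) {s s' t t' : List (Fin m)}
    (h : wordB lam p b (s ++ s') = wordB lam p b (t ++ t')) :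
    lam ^ (-(wordP p t : ℤ)) * (wordB lam p b s - wordB lam p b t) =
      wordB lam p b t' - lam ^ ((wordP p s : ℤ) - wordP p t) * wordB lam p b s' := by
  rw [wordB_append, wordB_append] at h
  rw [zpow_sub₀ hlam, zpow_neg, zpow_natCast, zpow_natCast]
  field_simp
  linear_combination h

lemma abs_zpow_neg_mul_wordB_sub_le (hlam0 : 0 < lam) (hlam1 : lam < 1) (hp : ∀ i, 1 ≤ p i)
    {s s' t t' : List (Fin m)} (h : wordB lam p b (s ++ s') = wordB lam p b (t ++ t')) :
    |lam ^ (-(wordP p t : ℤ)) * (wordB lam p b s - wordB lam p b t)| ≤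
      (1 + lam ^ ((wordP p s : ℤ) - wordP p t)) * bmax b / (1 - lam) := by
  rw [zpow_neg_mul_wordB_sub hlam0.ne' h]
  set q := (wordP p s : ℤ) - wordP p t
  calc |wordB lam p b t' - lam ^ q * wordB lam p b s'|
      ≤ |wordB lam p b t'| + |lam ^ q * wordB lam p b s'| := abs_sub _ _
    _ = |wordB lam p b t'| + lam ^ q * |wordB lam p b s'| := by
        rw [abs_mul, abs_of_pos (zpow_pos hlam0 q)]
    _ ≤ bmax b / (1 - lam) + lam ^ q * (bmax b / (1 - lam)) := by
        gcongr <;> exact abs_wordB_le hlam0.le hlam1 hp _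
    _ = (1 + lam ^ q) * bmax b / (1 - lam) := by ring

/-- The translation part `b_w` as a polynomial in `λ`, that is, `b_w = (wordPoly p b w)(λ)`. -/
def wordPoly (p : Fin m → ℕ) (b : Fin m → ℝ) : List (Fin m) → ℝ[X]
  | [] => 0
  | i :: w => X ^ p i * wordPoly p b w + C (b i)

lemma eval_wordPoly (w : List (Fin m)) : (wordPoly p b w).eval lam = wordB lam p b w := by
  induction w with
  | nil => simp [wordPoly]
  | cons i w ih => simp [wordPoly, ih]

lemma coeff_wordPoly_mem_Bset (hp : ∀ i, 1 ≤ p i) (w : List (Fin m)) (k : ℕ) :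
    (wordPoly p b w).coeff k ∈ Bset b := by
  induction w generalizing k with
  | nil => exact Or.inl (coeff_zero k)
  | cons i w ih =>
    rw [wordPoly, coeff_add, coeff_X_pow_mul', coeff_C]
    rcases Nat.eq_zero_or_pos k with rfl | hk
    · rw [if_neg (Nat.not_le.2 (hp i)), if_pos rfl, zero_add]
      exact Or.inr ⟨i, rfl⟩
    · rw [if_neg hk.ne', add_zero]
      split_ifs
      · exact ih _
      · exact Or.inl rfl

lemma coeff_wordPoly_eq_zero (hp : ∀ i, 1 ≤ p i) {w : List (Fin m)} {k : ℕ}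
    (hk : wordP p w ≤ k) : (wordPoly p b w).coeff k = 0 := by
  induction w generalizing k with
  | nil => exact coeff_zero k
  | cons i w ih =>
    rw [wordP_cons] at hk
    have := hp i
    rw [wordPoly, coeff_add, coeff_X_pow_mul', coeff_C, if_pos (by lia), if_neg (by lia),
      ih (by lia), add_zero]

lemma exists_eval_inv_eq_wordB_sub (hlam : lam ≠ 0) (hp : ∀ i, 1 ≤ p i) {s t : List (Fin m)}
    {n : ℕ} (hs : wordP p s ≤ n + 1) (ht : wordP p t ≤ n + 1) :
    ∃ R : ℝ[X], (∀ k, R.coeff k ∈ BB b) ∧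
      R.eval lam⁻¹ = lam⁻¹ ^ n * (wordB lam p b s - wordB lam p b t) := by
  have natDegree_le : (wordPoly p b s - wordPoly p b t).natDegree ≤ n := by
    refine natDegree_le_iff_coeff_eq_zero.2 fun k hk => ?_
    rw [coeff_sub, coeff_wordPoly_eq_zero hp (by lia), coeff_wordPoly_eq_zero hp (by lia), sub_zero]
  refine ⟨reflect n (wordPoly p b s - wordPoly p b t), fun k => ?_, ?_⟩
  · rw [coeff_reflect, coeff_sub]
    exact ⟨_, coeff_wordPoly_mem_Bset hp s _, _, coeff_wordPoly_mem_Bset hp t _, rfl⟩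
  · rw [eval_inv_reflect hlam natDegree_le, eval_sub, eval_wordPoly, eval_wordPoly]

lemma mem_Cset_of_prefix {T : ℕ} (hlam0 : 0 < lam) (hlam1 : lam < 1) (hp : ∀ i, 1 ≤ p i)
    {σ τ s t : List (Fin m)} (hB : wordB lam p b σ = wordB lam p b τ) (hs : s <+: σ) (ht : t <+: τ)
    (ht0 : 0 < wordP p t) (hst : wordP p s < wordP p t + T) (hts : wordP p t < wordP p s + T) :
    lam ^ (-(wordP p t : ℤ)) * (wordB lam p b s - wordB lam p b t) ∈ Cset lam b T := by
  constructor
  · obtain ⟨s', rfl⟩ := hs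
    obtain ⟨t', rfl⟩ := ht
    refine (abs_zpow_neg_mul_wordB_sub_le hlam0 hlam1 hp hB).trans ?_
    have zpow_le : lam ^ ((wordP p s : ℤ) - wordP p t) ≤ lam ^ (1 - (T : ℤ)) :=
      zpow_le_zpow_right_of_le_one₀ hlam0 hlam1.le (by lia)
    have := bmax_nonneg b
    have := sub_pos.2 hlam1
    gcongr
  · obtain ⟨R, hR, eval_R⟩ := exists_eval_inv_eq_wordB_sub (b := b) hlam0.ne' hp
      (s := s) (t := t) (n := T + wordP p t - 2) (by lia) (by lia)
    refine ⟨R, hR, ?_⟩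
    have exponents : 2 - (T : ℤ) + -(wordP p t : ℤ) = -((T + wordP p t - 2 : ℕ) : ℤ) := by lia
    rw [eval_R, ← mul_assoc, ← zpow_add₀ hlam0.ne', exponents, zpow_neg, zpow_natCast, inv_pow]

lemma mem_Xi_of_prefix {T : ℕ} (hlam0 : 0 < lam) (hlam1 : lam < 1) (hp : ∀ i, 1 ≤ p i)
    {σ τ s t : List (Fin m)} (hB : wordB lam p b σ = wordB lam p b τ) (hs : s <+: σ) (ht : t <+: τ)
    (ht0 : 0 < wordP p t) (hst : wordP p s < wordP p t + T) (hts : wordP p t < wordP p s + T) :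
    ((wordP p s : ℤ) - (wordP p t : ℤ),
      lam ^ (-(wordP p t : ℤ)) * (wordB lam p b s - wordB lam p b t)) ∈ Xi lam b T :=
  ⟨abs_le.2 ⟨by dsimp only; lia, by dsimp only; lia⟩,
    mem_Cset_of_prefix hlam0 hlam1 hp hB hs ht ht0 hst hts⟩

end Words

theorem stmt8_general (lam : ℝ) (hlam0 : 0 < lam) (hlam1 : lam < 1)
    {m : ℕ} (p : Fin m → ℕ) (hp : ∀ i, 1 ≤ p i) (b : Fin m → ℝ)
    (T : ℕ) (hpT : ∀ i, p i ≤ T)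
    (σ τ : List (Fin m)) (hσ : σ ≠ [])
    (heq : SW lam p b σ = SW lam p b τ) :
    ∃ M : ℕ, 1 ≤ M ∧ ∃ σs τs : ℕ → List (Fin m),
      σs M = σ ∧ τs M = τ ∧
      ∀ k : ℕ, 1 ≤ k → k ≤ M →
        (σs k) <+: σ ∧ (τs k) <+: τ ∧
        (k - 1) * T < wordP p (σs k) ∧ wordP p (σs k) ≤ k * T ∧
        (k - 1) * T < wordP p (τs k) ∧ wordP p (τs k) ≤ k * T ∧
        ((wordP p (σs k) : ℤ) - (wordP p (τs k) : ℤ),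
          lam ^ (-(wordP p (τs k) : ℤ)) *
            (wordB lam p b (σs k) - wordB lam p b (τs k))) ∈ Xi lam b T := by
  have hP : wordP p σ = wordP p τ := wordP_eq_of_SW_eq hlam0 hlam1.ne heq
  have hσ_pos : 0 < wordP p σ := wordP_pos hp hσ
  have hT : 0 < T := (hp (σ.head hσ)).trans (hpT _)
  set M := wordP p σ ⌈/⌉ T
  have hM : wordP p σ ≤ M * T := mul_comm T M ▸ le_smul_ceilDiv hT
  have hM_pos : 0 < M := Nat.pos_of_mul_pos_right (hσ_pos.trans_le hM)
  refine ⟨M, hM_pos, fun k => cut p (k * T) σ, fun k => cut p (k * T) τ,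
    cut_eq_self hM, cut_eq_self (hP ▸ hM), fun k hk hkM => ?_⟩
  obtain ⟨j, rfl⟩ := Nat.exists_eq_add_of_le' hk
  have hj : j * T < wordP p σ := by
    rw [mul_comm]
    exact not_le.1 fun h => hkM.not_gt (Nat.lt_succ_of_le ((ceilDiv_le_iff_le_smul hT).2 h))
  have hσ_lt : j * T < wordP p (cut p ((j + 1) * T) σ) :=
    Nat.succ_mul j T ▸ lt_wordP_cut hpT hj
  have hτ_lt : j * T < wordP p (cut p ((j + 1) * T) τ) :=
    Nat.succ_mul j T ▸ lt_wordP_cut hpT (hP ▸ hj)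
  have hσ_le := wordP_cut_le (p := p) ((j + 1) * T) σ
  have hτ_le := wordP_cut_le (p := p) ((j + 1) * T) τ
  refine ⟨cut_prefix _ _, cut_prefix _ _, hσ_lt, hσ_le, hτ_lt, hτ_le,
    mem_Xi_of_prefix hlam0 hlam1 hp (wordB_eq_of_SW_eq heq) (cut_prefix _ _) (cut_prefix _ _)
      (Nat.zero_lt_of_lt hτ_lt) ?_ ?_⟩ <;> lia

theorem stmt8 (lam : ℝ) (hlam0 : 0 < lam) (hlam1 : lam < 1)
    (hPisot : IsPisot lam⁻¹)
    {m : ℕ} (hm : 2 ≤ m) (p : Fin m → ℕ) (hp : ∀ i, 1 ≤ p i)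
    (b : Fin m → ℝ) (hbZ : ∀ i, ∃ z : ℤ, b i = (z : ℝ))
    (T : ℕ) (hT : T = Finset.univ.sup p)
    (σ τ : List (Fin m)) (hσ : σ ≠ []) (hτ : τ ≠ [])
    (heq : SW lam p b σ = SW lam p b τ) :
    ∃ M : ℕ, 1 ≤ M ∧ ∃ σs τs : ℕ → List (Fin m),
      σs M = σ ∧ τs M = τ ∧
      ∀ k : ℕ, 1 ≤ k → k ≤ M →
        (σs k) <+: σ ∧ (τs k) <+: τ ∧
        (k - 1) * T < wordP p (σs k) ∧ wordP p (σs k) ≤ k * T ∧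
        (k - 1) * T < wordP p (τs k) ∧ wordP p (τs k) ≤ k * T ∧
        ((wordP p (σs k) : ℤ) - (wordP p (τs k) : ℤ),
          lam ^ (-(wordP p (τs k) : ℤ)) *
            (wordB lam p b (σs k) - wordB lam p b (τs k))) ∈ Xi lam b T :=
  stmt8_general lam hlam0 hlam1 p hp b T (fun i => hT ▸ Finset.le_sup (Finset.mem_univ i))
    σ τ hσ heq

end PVOSC
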